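/- arXiv:2302.05810 — 5 statements merged into one kernel-verified Lean document; each statement's English description precedes it below -/
import Mathlib

section
/- The Random Dictator mechanism, which outputs the preferred budget of a voter chosen uniformly at random, has distortion exactly 2. Precisely: (a) for all m ≥ 1, n ≥ 1 and every vote profile (v_1,…,v_n) of budgets on m projects, Σ_{i=1}^n Σ_{l=1}^n d(v_i, v_l) ≤ 2·n·min_{p∈𝔹} Σ_{l=1}^n d(p, v_l); and (b) for every ε > 0 there exist m, n and a vote profile (v_1,…,v_n) of budgets on m projects with min_{p∈𝔹} Σ_{l=1}^n d(p, v_l) > 0 such that Σ_{i=1}^n Σ_{l=1}^n d(v_i, v_l) > (2 − ε)·n·min_{p∈𝔹} Σ_{l=1}^n d(p, v_l). -/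
/-- A budget on `m` projects: nonnegative allocations summing to 1. -/
def IsBudget {m : ℕ} (b : Fin m → ℝ) : Prop :=
  (∀ j, 0 ≤ b j) ∧ ∑ j, b j = 1

/-- The ℓ₁ cost `d(a,b)`. -/
noncomputable def cost {m : ℕ} (a b : Fin m → ℝ) : ℝ := ∑ j, |a j - b j|

/-- The Random Dictator mechanism has distortion exactly 2:
(a) for every vote profile, `Σ_i Σ_l d(v_i, v_l) ≤ 2·n·min_{p∈𝔹} Σ_l d(p, v_l)`
    (expressed equivalently as a bound against every `p ∈ 𝔹`); and
(b) for every `ε > 0` there is an instance with positive optimal social cost where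
    `Σ_i Σ_l d(v_i, v_l) > (2 − ε)·n·min_{p∈𝔹} Σ_l d(p, v_l)`
    (expressed via a minimizer `popt`). -/
theorem random_dictator_distortion_two :
    (∀ (m n : ℕ), 1 ≤ m → 1 ≤ n → ∀ v : Fin n → Fin m → ℝ, (∀ i, IsBudget (v i)) →
      ∀ p : Fin m → ℝ, IsBudget p →
        ∑ i, ∑ l, cost (v i) (v l) ≤ 2 * n * ∑ l, cost p (v l)) ∧
    (∀ ε : ℝ, 0 < ε → ∃ (m n : ℕ) (v : Fin n → Fin m → ℝ) (popt : Fin m → ℝ),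
      (∀ i, IsBudget (v i)) ∧ IsBudget popt ∧
      (∀ p : Fin m → ℝ, IsBudget p → ∑ l, cost popt (v l) ≤ ∑ l, cost p (v l)) ∧
      0 < ∑ l, cost popt (v l) ∧
      (2 - ε) * (n * ∑ l, cost popt (v l)) < ∑ i, ∑ l, cost (v i) (v l)) := by
  constructor
  · intro m n _ _ v _ p _
    have h : ∀ i l, cost (v i) (v l) ≤ cost p (v i) + cost p (v l) := by
      intro i l
      unfold cost
      rw [← Finset.sum_add_distrib]
      refine Finset.sum_le_sum fun j _ => ?_
      rw [abs_sub_comm (p j) (v i j)]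
      exact abs_sub_le _ _ _
    calc ∑ i, ∑ l, cost (v i) (v l) ≤ ∑ i, ∑ l, (cost p (v i) + cost p (v l)) :=
          Finset.sum_le_sum fun i _ => Finset.sum_le_sum fun l _ => h i l
      _ = 2 * n * ∑ l, cost p (v l) := by
          simp only [Finset.sum_add_distrib, Finset.sum_const, Finset.card_univ,
            Fintype.card_fin, nsmul_eq_mul, ← Finset.mul_sum]
          ring
  · intro ε hε
    obtain ⟨k, hk⟩ := exists_nat_gt (2 / ε)
    rw [div_lt_iff₀ hε] at hk
    let v : Fin (k + 2) → Fin 2 → ℝ := Fin.cons ![0, 1] (fun _ => ![1, 0])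
    have hv0 : v 0 = ![0, 1] := rfl
    have hvs : ∀ i : Fin (k + 1), v i.succ = ![1, 0] := fun i => rfl
    have hs : ∀ p, ∑ l, cost p (v l) = cost p ![0, 1] + (k + 1) * cost p ![1, 0] := by
      intro p
      rw [Fin.sum_univ_succ]
      simp [hv0, hvs]
    have c1 : cost ![(1 : ℝ), 0] ![0, 1] = 2 := by simp [cost]; norm_num
    have c2 : cost ![(0 : ℝ), 1] ![1, 0] = 2 := by simp [cost]; norm_num
    have c3 : cost ![(1 : ℝ), 0] ![1, 0] = 0 := by simp [cost]
    have c4 : cost ![(0 : ℝ), 1] ![0, 1] = 0 := by simp [cost]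
    refine ⟨2, k + 2, v, ![1, 0], ?_, ?_, ?_, ?_, ?_⟩
    · intro i
      refine Fin.cases ?_ (fun i => ?_) i
      · rw [hv0]; simp [IsBudget]
      · rw [hvs]; simp [IsBudget]
    · simp [IsBudget]
    · intro p _
      rw [hs, hs, c1, c3]
      have h1 : 0 ≤ cost p ![1, 0] := Finset.sum_nonneg fun _ _ => abs_nonneg _
      have h2 : 2 ≤ cost p ![0, 1] + cost p ![1, 0] := by
        simp only [cost, Fin.sum_univ_two, Matrix.cons_val_zero, Matrix.cons_val_one]
        have a := le_abs_self (p 0 - 0)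
        have b := neg_le_abs (p 0 - 1)
        have c := neg_le_abs (p 1 - 1)
        have d := le_abs_self (p 1 - 0)
        linarith
      have h3 : 0 ≤ (k : ℝ) * cost p ![1, 0] := by positivity
      linarith
    · rw [hs, c1, c3]; norm_num
    · simp only [hs]
      rw [Fin.sum_univ_succ]
      simp only [hv0, hvs, c1, c2, c3, c4, Finset.sum_const, Finset.card_univ,
        Fintype.card_fin, nsmul_eq_mul]
      push_cast
      nlinarith
end

section
/- Random Diarchy is the class of mechanisms that sample two voters i, j ∈ [n] independently and uniformly at random with replacement and output the convex combination α·v_i + (1−α)·v_j, where α = α(P, i, j) ∈ [0,1] may depend arbitrarily on the whole vote profile P and the sampled pair. The infimum over Random Diarchy of the distortion equals 2. Precisely: (a) for every such coefficient rule α and every ε > 0 there exist m, n and a vote profile (v_1,…,v_n) of budgets on m projects with min_{p∈𝔹} Σ_{l=1}^n d(p, v_l) > 0 such that (1/n²) Σ_{(i,j)∈[n]²} Σ_{l=1}^n d(α(P,i,j)·v_i + (1−α(P,i,j))·v_j, v_l) > (2 − ε)·min_{p∈𝔹} Σ_{l=1}^n d(p, v_l); and (b) the constant rule α ≡ 1 satisfies,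 for every vote profile, (1/n²) Σ_{(i,j)∈[n]²} Σ_{l=1}^n d(v_i, v_l) ≤ 2·min_{p∈𝔹} Σ_{l=1}^n d(p, v_l). -/
/-- The hard instance: voter `l` shifts `c` from its second project to its first one. -/
noncomputable def hardV (n : ℕ) (c : ℝ) (l : Fin n) : Fin (n + n) → ℝ :=
  Fin.addCases (fun i => if i = l then 2 * c else c) (fun i => if i = l then 0 else c)

lemma cost_hard {n : ℕ} (c : ℝ) (p : Fin (n + n) → ℝ) (l : Fin n) :
    cost p (hardV n c l) = ∑ i, |p (Fin.castAdd n i) - (if i = l then 2 * c else c)|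
      + ∑ i, |p (Fin.natAdd n i) - (if i = l then 0 else c)| := by
  simp only [cost, hardV, Fin.sum_univ_add, Fin.addCases_left, Fin.addCases_right]

lemma hard_budget {n : ℕ} {c : ℝ} (hc : 0 ≤ c) (h : 2 * (n : ℝ) * c = 1) (l : Fin n) :
    IsBudget (hardV n c l) := by
  constructor
  · intro j
    refine Fin.addCases (fun i => ?_) (fun i => ?_) j <;> simp only [hardV, Fin.addCases_left, Fin.addCases_right] <;> split_ifs <;> linarith
  · rw [Fin.sum_univ_add]
    simp only [hardV, Fin.addCases_left, Fin.addCases_right]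
    rw [← Finset.sum_add_distrib]
    have : ∀ i : Fin n, ((if i = l then 2 * c else c) + (if i = l then 0 else c)) = 2 * c := by
      intro i; split_ifs <;> ring
    simp only [this]
    simp; linarith

lemma cost_const {n : ℕ} {c : ℝ} (hc : 0 ≤ c) (l : Fin n) :
    cost (fun _ => c) (hardV n c l) = 2 * c := by
  rw [cost_hard, ← Finset.sum_add_distrib]
  have : ∀ i : Fin n, |c - (if i = l then 2 * c else c)| + |c - (if i = l then 0 else c)|
      = if i = l then 2 * c else 0 := by
    intro i
    split_ifs
    · rw [abs_of_nonpos (by linarith), abs_of_nonneg (by linarith)]; ring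
    · simp
  simp [this]

lemma two_le {n : ℕ} (hn : 2 ≤ n) (x a b : ℝ) (i : Fin n) :
    |a - b| ≤ ∑ l : Fin n, |x - (if i = l then a else b)| := by
  have : Nontrivial (Fin n) := Fin.nontrivial_iff_two_le.mpr hn
  obtain ⟨k, hk⟩ := exists_ne i
  have h := Finset.sum_le_sum_of_subset_of_nonneg (f := fun l : Fin n => |x - (if i = l then a else b)|)
    (Finset.subset_univ {i, k}) (fun _ _ _ => abs_nonneg _)
  rw [Finset.sum_pair hk.symm] at h
  simp only [if_true, if_neg hk.symm] at h
  have := abs_sub_le a x b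
  rw [abs_sub_comm a x] at this
  linarith

lemma hard_opt {n : ℕ} {c : ℝ} (hc : 0 ≤ c) (hn : 2 ≤ n) (p : Fin (n + n) → ℝ) :
    2 * n * c ≤ ∑ l, cost p (hardV n c l) := by
  simp only [cost_hard]
  rw [Finset.sum_add_distrib, Finset.sum_comm, Finset.sum_comm (γ := Fin n) (f := fun l i => |p (Fin.natAdd n i) - (if i = l then 0 else c)|)]
  have h1 : ∑ i : Fin n, c ≤ ∑ i : Fin n, ∑ l : Fin n, |p (Fin.castAdd n i) - (if i = l then 2 * c else c)| := by
    refine Finset.sum_le_sum fun i _ => ?_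
    have := two_le hn (p (Fin.castAdd n i)) (2 * c) c i
    rwa [show 2 * c - c = c by ring, abs_of_nonneg hc] at this
  have h2 : ∑ i : Fin n, c ≤ ∑ i : Fin n, ∑ l : Fin n, |p (Fin.natAdd n i) - (if i = l then 0 else c)| := by
    refine Finset.sum_le_sum fun i _ => ?_
    have := two_le hn (p (Fin.natAdd n i)) 0 c i
    rwa [zero_sub, abs_neg, abs_of_nonneg hc] at this
  simp only [Finset.sum_const, Finset.card_univ, Fintype.card_fin, nsmul_eq_mul] at h1 h2
  linarith

lemma hard_pair {n : ℕ} {c a : ℝ} (hc : 0 ≤ c) (ha : 0 ≤ a) (ha1 : a ≤ 1) (i j l : Fin n) :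
    4 * c - (if l = i then 4 * c else 0) - (if l = j then 4 * c else 0) ≤
      cost (fun t => a * hardV n c i t + (1 - a) * hardV n c j t) (hardV n c l) := by
  have h0 : 0 ≤ cost (fun t => a * hardV n c i t + (1 - a) * hardV n c j t) (hardV n c l) :=
    Finset.sum_nonneg fun _ _ => abs_nonneg _
  by_cases hi : l = i
  · rw [if_pos hi]; split_ifs <;> linarith
  by_cases hj : l = j
  · rw [if_pos hj, if_neg hi]; linarith
  rw [if_neg hi, if_neg hj, cost_hard]
  simp only [hardV, Fin.addCases_left, Fin.addCases_right]
  rw [← Finset.sum_add_distrib]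
  have key : ∀ t : Fin n, (if t = i then 2 * (a * c) else 0) + (if t = j then 2 * ((1 - a) * c) else 0)
      + (if t = l then 2 * c else 0) ≤
      |a * (if t = i then 2 * c else c) + (1 - a) * (if t = j then 2 * c else c) - (if t = l then 2 * c else c)|
      + |a * (if t = i then 0 else c) + (1 - a) * (if t = j then 0 else c) - (if t = l then 0 else c)| := by
    intro t
    by_cases hl : t = l
    · subst hl
      simp only [if_neg hi, if_neg hj, if_true]
      have h1 := neg_abs_le (a * c + (1 - a) * c - 2 * c)
      have h2 := le_abs_self (a * c + (1 - a) * c - 0)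
      linarith
    · simp only [if_neg hl]
      refine le_trans ?_ (add_le_add (le_abs_self _) (neg_le_abs _))
      split_ifs <;> linarith
  refine le_trans ?_ (Finset.sum_le_sum fun t _ => key t)
  simp only [Finset.sum_add_distrib, Finset.sum_ite_eq', Finset.mem_univ, if_true]
  linarith

lemma cost_tri {m : ℕ} (p a b : Fin m → ℝ) : cost a b ≤ cost p a + cost p b := by
  unfold cost
  rw [← Finset.sum_add_distrib]
  refine Finset.sum_le_sum fun j _ => ?_
  have := abs_sub_le (a j) (p j) (b j)
  rwa [abs_sub_comm (a j) (p j)] at this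

/-- The infimum over Random Diarchy mechanisms of the distortion equals 2:
(a) for every coefficient rule `α` (with values in `[0,1]`, possibly depending on the
whole vote profile and the sampled ordered pair) and every `ε > 0` there is an instance
with positive optimal social cost where the expected social cost of the output
`α·v_i + (1−α)·v_j` exceeds `(2 − ε)` times the optimum; and
(b) the constant rule `α ≡ 1` achieves a distortion of at most 2 on every profile. -/
theorem random_diarchy_distortion_two :
    (∀ α : (m n : ℕ) → (Fin n → Fin m → ℝ) → Fin n → Fin n → ℝ,
      (∀ (m n : ℕ) (v : Fin n → Fin m → ℝ) (i j : Fin n),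
        0 ≤ α m n v i j ∧ α m n v i j ≤ 1) →
      ∀ ε : ℝ, 0 < ε →
        ∃ (m n : ℕ) (v : Fin n → Fin m → ℝ) (popt : Fin m → ℝ),
          (∀ i, IsBudget (v i)) ∧ IsBudget popt ∧
          (∀ p : Fin m → ℝ, IsBudget p →
            ∑ l, cost popt (v l) ≤ ∑ l, cost p (v l)) ∧
          0 < ∑ l, cost popt (v l) ∧
          (2 - ε) * ∑ l, cost popt (v l) <
            (1 / (n : ℝ) ^ 2) * ∑ i, ∑ j, ∑ l,
              cost (fun t => α m n v i j * v i t + (1 - α m n v i j) * v j t) (v l)) ∧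
    (∀ (m n : ℕ) (v : Fin n → Fin m → ℝ), (∀ i, IsBudget (v i)) →
      ∀ p : Fin m → ℝ, IsBudget p →
        (1 / (n : ℝ) ^ 2) * ∑ i : Fin n, ∑ j : Fin n, ∑ l, cost (v i) (v l) ≤
          2 * ∑ l, cost p (v l)) := by
  constructor
  · intro α hα ε hε
    obtain ⟨N, hN⟩ := exists_nat_gt (4 / ε)
    obtain ⟨n, hn2, hnN⟩ : ∃ n : ℕ, 2 ≤ n ∧ N ≤ n := ⟨N + 2, by omega, by omega⟩
    have hn0 : (0 : ℝ) < n := by exact_mod_cast (by omega : 0 < n)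
    have hnε : 4 < ε * n := by
      have : 4 / ε < n := lt_of_lt_of_le hN (by exact_mod_cast hnN)
      rw [div_lt_iff₀ hε] at this
      linarith
    obtain ⟨c, hc⟩ : ∃ c : ℝ, c = 1 / (2 * n) := ⟨_, rfl⟩
    have hc0 : 0 ≤ c := by rw [hc]; positivity
    have hc1 : 2 * (n : ℝ) * c = 1 := by rw [hc]; field_simp
    have hopt : ∑ l : Fin n, cost (fun _ => c) (hardV n c l) = 1 := by
      simp only [cost_const hc0]
      simp; linarith
    refine ⟨n + n, n, hardV n c, fun _ => c, hard_budget hc0 hc1, ⟨fun _ => hc0, ?_⟩, ?_, ?_, ?_⟩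
    · simp; linarith
    · intro p _
      rw [hopt, ← hc1]
      exact hard_opt hc0 hn2 p
    · rw [hopt]; norm_num
    · rw [hopt]
      have hb : ∀ i j : Fin n, 2 - 8 * c ≤ ∑ l, cost (fun t => α (n + n) n (hardV n c) i j * hardV n c i t
          + (1 - α (n + n) n (hardV n c) i j) * hardV n c j t) (hardV n c l) := by
        intro i j
        refine le_trans ?_ (Finset.sum_le_sum fun l _ =>
          hard_pair hc0 (hα _ _ _ i j).1 (hα _ _ _ i j).2 i j l)
        simp only [Finset.sum_sub_distrib, Finset.sum_ite_eq', Finset.mem_univ, if_true]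
        simp; linarith
      have hs := Finset.sum_le_sum fun i (_ : i ∈ (Finset.univ : Finset (Fin n))) =>
        Finset.sum_le_sum fun j (_ : j ∈ (Finset.univ : Finset (Fin n))) => hb i j
      simp only [Finset.sum_const, Finset.card_univ, Fintype.card_fin, nsmul_eq_mul] at hs
      have h1 : (1 / (n : ℝ) ^ 2) * (n * (n * (2 - 8 * c))) = 2 - 8 * c := by field_simp
      have h2 := mul_le_mul_of_nonneg_left hs (by positivity : (0 : ℝ) ≤ 1 / (n : ℝ) ^ 2)
      rw [h1] at h2
      refine lt_of_lt_of_le ?_ h2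
      have : 8 * c < ε := by
        have : 8 * c = 4 / n := by rw [hc]; field_simp; norm_num
        rw [this, div_lt_iff₀ hn0]; exact hnε
      linarith
  · intro m n v _ p _
    rcases Nat.eq_zero_or_pos n with rfl | hn
    · simp
    have hn0 : (0 : ℝ) < n := by exact_mod_cast hn
    have hs : ∑ i : Fin n, ∑ j : Fin n, ∑ l, cost (v i) (v l) ≤
        ∑ i : Fin n, ∑ j : Fin n, ∑ l, (cost p (v i) + cost p (v l)) :=
      Finset.sum_le_sum fun i _ => Finset.sum_le_sum fun j _ => Finset.sum_le_sum fun l _ =>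
        cost_tri p _ _
    have he : ∑ i : Fin n, ∑ j : Fin n, ∑ l, (cost p (v i) + cost p (v l)) =
        (n : ℝ) ^ 2 * (2 * ∑ l, cost p (v l)) := by
      simp only [Finset.sum_add_distrib, Finset.sum_const, Finset.card_univ, Fintype.card_fin,
        nsmul_eq_mul, ← Finset.mul_sum]
      ring
    rw [he] at hs
    rw [one_div, inv_mul_le_iff₀ (by positivity)]
    exact hs
end

section
/- Every Random Referee mechanism has distortion at least 2. Precisely: for every rule r that, given a vote profile P = (v_1,…,v_n) and an ordered triple (i,j,k) ∈ [n]³ of voters sampled uniformly at random with replacement, outputs either v_i or v_j (the choice being an arbitrary function of P, i, j, k), and for every ε > 0, there exist m, n and a vote profile of budgets on m projects with min_{p∈𝔹} Σ_{l=1}^n d(p, v_l) > 0 such that (1/n³) Σ_{(i,j,k)∈[n]³} Σ_{l=1}^n d(r(P,i,j,k), v_l) > (2 − ε)·min_{p∈𝔹} Σ_{l=1}^n d(p, v_l). -/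
/-- The vote of voter `i`: uniform allocation shifted by `δ` inside the `i`-th pair of projects. -/
noncomputable def starVote (n : ℕ) (δ : ℝ) (i : Fin n) (j : Fin (n * 2)) : ℝ :=
  if (finProdFinEquiv.symm j).1 = i then
    (if (finProdFinEquiv.symm j).2 = 0 then 2 * δ else 0) else δ

theorem sum_pairs (n : ℕ) (f : Fin (n * 2) → ℝ) :
    ∑ j, f j = ∑ x : Fin n, (f (finProdFinEquiv (x, 0)) + f (finProdFinEquiv (x, 1))) := by
  rw [← (finProdFinEquiv (m := n) (n := 2)).sum_comp, Fintype.sum_prod_type]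
  simp [Fin.sum_univ_two]

theorem starVote_zero (n : ℕ) (δ : ℝ) (i x : Fin n) :
    starVote n δ i (finProdFinEquiv (x, 0)) = if x = i then 2 * δ else δ := by
  simp only [starVote, Equiv.symm_apply_apply]; simp

theorem starVote_one (n : ℕ) (δ : ℝ) (i x : Fin n) :
    starVote n δ i (finProdFinEquiv (x, 1)) = if x = i then 0 else δ := by
  simp only [starVote, Equiv.symm_apply_apply]; simp

theorem starVote_sum (n : ℕ) (δ : ℝ) (i : Fin n) : ∑ j, starVote n δ i j = n * (2 * δ) := by
  rw [sum_pairs]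
  have : ∀ x : Fin n, starVote n δ i (finProdFinEquiv (x, 0)) +
      starVote n δ i (finProdFinEquiv (x, 1)) = 2 * δ := by
    intro x
    rw [starVote_zero, starVote_one]
    split_ifs <;> ring
  simp [this]

theorem cost_center (n : ℕ) (δ : ℝ) (hδ : 0 < δ) (l : Fin n) :
    cost (fun _ => δ) (starVote n δ l) = 2 * δ := by
  rw [cost, sum_pairs]
  have : ∀ x : Fin n, |δ - starVote n δ l (finProdFinEquiv (x, 0))| +
      |δ - starVote n δ l (finProdFinEquiv (x, 1))| = if x = l then 2 * δ else 0 := by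
    intro x
    rw [starVote_zero, starVote_one]
    split_ifs
    · rw [show δ - 2 * δ = -δ by ring, abs_neg, sub_zero, abs_of_pos hδ]; ring
    · simp
  simp [this]

theorem cost_pair (n : ℕ) (δ : ℝ) (hδ : 0 < δ) (i l : Fin n) :
    cost (starVote n δ i) (starVote n δ l) = 4 * δ - if l = i then 4 * δ else 0 := by
  by_cases h : l = i
  · subst h; simp [cost]
  rw [cost, sum_pairs]
  have : ∀ x : Fin n, |starVote n δ i (finProdFinEquiv (x, 0))
        - starVote n δ l (finProdFinEquiv (x, 0))| +
      |starVote n δ i (finProdFinEquiv (x, 1)) - starVote n δ l (finProdFinEquiv (x, 1))|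
      = (if x = i then 2 * δ else 0) + if x = l then 2 * δ else 0 := by
    intro x
    rw [starVote_zero, starVote_one, starVote_zero, starVote_one]
    have e1 : δ - 2 * δ = -δ := by ring
    have e2 : 2 * δ - δ = δ := by ring
    split_ifs with h1 h2 h2
    · exact absurd (h2.symm.trans h1) h
    · rw [e2, zero_sub, abs_neg, abs_of_pos hδ]; ring
    · rw [e1, sub_zero, abs_neg, abs_of_pos hδ]; ring
    · simp
  simp only [this, Finset.sum_add_distrib]
  simp [h]
  ring

theorem cost_lower (n : ℕ) (hn : 2 ≤ n) (δ : ℝ) (hδ : 0 < δ) (p : Fin (n * 2) → ℝ) :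
    n * (2 * δ) ≤ ∑ l, cost p (starVote n δ l) := by
  have key : ∀ j, δ ≤ ∑ l, |p j - starVote n δ l j| := by
    intro j
    have : Nontrivial (Fin n) := Fin.nontrivial_iff_two_le.mpr hn
    obtain ⟨y, hy⟩ := exists_ne (finProdFinEquiv.symm j).1
    have h1 := Finset.sum_le_sum_of_subset_of_nonneg
      (Finset.subset_univ ({(finProdFinEquiv.symm j).1, y} : Finset (Fin n)))
      (f := fun l => |p j - starVote n δ l j|) (fun _ _ _ => abs_nonneg _)
    rw [Finset.sum_pair hy.symm] at h1
    refine le_trans ?_ h1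
    have h2 : starVote n δ y j = δ := by
      unfold starVote; rw [if_neg hy.symm]
    rw [h2]
    unfold starVote
    rw [if_pos rfl]
    split_ifs
    · have := neg_abs_le (p j - 2 * δ)
      have := le_abs_self (p j - δ)
      linarith
    · have := le_abs_self (p j - 0)
      have := neg_abs_le (p j - δ)
      linarith
  unfold cost
  rw [Finset.sum_comm]
  calc (n : ℝ) * (2 * δ) = ∑ _j : Fin (n * 2), δ := by simp; ring
    _ ≤ _ := Finset.sum_le_sum fun j _ => key j

/-- Every Random Referee mechanism has distortion at least 2: for every rule `r` that,
given a vote profile and an ordered triple `(i,j,k)` of sampled voters, outputs either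
`v_i` or `v_j`, and every `ε > 0`, there is an instance with positive optimal social
cost where the expected social cost of the output exceeds `(2 − ε)` times the optimum. -/
theorem random_referee_distortion_ge_two
    (r : (m n : ℕ) → (Fin n → Fin m → ℝ) → Fin n → Fin n → Fin n → (Fin m → ℝ))
    (hr : ∀ (m n : ℕ) (v : Fin n → Fin m → ℝ) (i j k : Fin n),
      r m n v i j k = v i ∨ r m n v i j k = v j)
    (ε : ℝ) (hε : 0 < ε) :
    ∃ (m n : ℕ) (v : Fin n → Fin m → ℝ) (popt : Fin m → ℝ),
      (∀ i, IsBudget (v i)) ∧ IsBudget popt ∧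
      (∀ p : Fin m → ℝ, IsBudget p → ∑ l, cost popt (v l) ≤ ∑ l, cost p (v l)) ∧
      0 < ∑ l, cost popt (v l) ∧
      (2 - ε) * ∑ l, cost popt (v l) <
        (1 / (n : ℝ) ^ 3) * ∑ i, ∑ j, ∑ k, ∑ l, cost (r m n v i j k) (v l) := by
  obtain ⟨N, hN⟩ := exists_nat_gt (2 / ε)
  set n := N + 2 with hn
  have hn0 : (0 : ℝ) < n := by rw [hn]; positivity
  have hnε : 2 / ε < n := by rw [hn]; push_cast; linarith
  set δ : ℝ := 1 / (2 * n) with hδd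
  have hδ : 0 < δ := by positivity
  have hnδ : (n : ℝ) * (2 * δ) = 1 := by rw [hδd]; field_simp
  have hopt : ∑ l, cost (fun _ => δ) (starVote n δ l) = 1 := by
    simp only [cost_center n δ hδ]
    simpa using hnδ
  have hv : ∀ i, ∑ l, cost (starVote n δ i) (starVote n δ l) = 2 - 2 / n := by
    intro i
    simp only [cost_pair n δ hδ, Finset.sum_sub_distrib]
    simp
    rw [hδd]; field_simp; ring
  refine ⟨n * 2, n, starVote n δ, fun _ => δ, ?_, ⟨fun _ => hδ.le, ?_⟩, ?_, ?_, ?_⟩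
  · intro i
    refine ⟨fun j => ?_, by rw [starVote_sum, hnδ]⟩
    unfold starVote
    split_ifs <;> linarith
  · simp only [Finset.sum_const, Finset.card_univ, Fintype.card_fin, nsmul_eq_mul]
    push_cast
    linarith
  · intro p _
    rw [hopt, ← hnδ]
    exact cost_lower n (by omega) δ hδ p
  · rw [hopt]; exact one_pos
  · have hR : ∀ i j k, ∑ l, cost (r (n * 2) n (starVote n δ) i j k) (starVote n δ l)
        = 2 - 2 / n := by
      intro i j k
      rcases hr (n * 2) n (starVote n δ) i j k with h | h <;> rw [h, hv]
    rw [hopt]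
    simp only [hR, Finset.sum_const, Finset.card_univ, Fintype.card_fin, nsmul_eq_mul]
    have e : 1 / (n : ℝ) ^ 3 * (n * (n * (n * (2 - 2 / n)))) = 2 - 2 / n := by
      field_simp
    rw [e]
    have : 2 / (n : ℝ) < ε := by
      rw [div_lt_iff₀ hε] at hnε
      rw [div_lt_iff₀ hn0]; linarith
    linarith
end

section
/- Lower bound of 1.38 on the distortion of Nash bargaining with three sampled voters: consider the PB instance with m = 2201 projects and n = 5200 voters, where for i = 1,…,2200 voter i's preferred budget v_i is the unit vector o_i (allocation 1 to project i and 0 elsewhere), and for i = 2201,…,5200 voter i's preferred budget is o_{2201}. Then min_{p∈𝔹} Σ_{l=1}^{5200} d(p, v_l) = 4400, and for every function z assigning to each ordered triple (i,j,k) ∈ [5200]³ a Nash bargaining outcome z(i,j,k) for agents v_i, v_j with disagreement point v_k, (1/5200³) Σ_{(i,j,k)∈[5200]³} Σ_{l=1}^{5200} d(z(i,j,k), v_l) > 1.38 · 4400. In particular, the distortion of every Nash bargaining scheme with three uniformly sampled voters exceeds 1.38. -/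
/-- The overlap utility `u(a,b)`. -/
noncomputable def util {m : ℕ} (a b : Fin m → ℝ) : ℝ := ∑ j, min (a j) (b j)

/-- `z` is a Nash bargaining outcome for agents `a, b` with disagreement point `c`. -/
def NashOutcome {m : ℕ} (a b c z : Fin m → ℝ) : Prop :=
  IsBudget z ∧ util a c ≤ util a z ∧ util b c ≤ util b z ∧
  (∀ z' : Fin m → ℝ, IsBudget z' → util a c ≤ util a z' → util b c ≤ util b z' →
    (util a z' - util a c) * (util b z' - util b c) ≤
      (util a z - util a c) * (util b z - util b c)) ∧
  (∀ z' : Fin m → ℝ, IsBudget z' → util a c ≤ util a z' → util b c ≤ util b z' →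
    (util a z' - util a c) * (util b z' - util b c) =
      (util a z - util a c) * (util b z - util b c) →
    util c z' ≤ util c z)

/-- The lower-bound PB instance: 2201 projects and 5200 voters; voter `i < 2200`
prefers the unit vector `o_i`, and every voter `i ≥ 2200` prefers `o_{2200}`
(0-based indexing of the 2201-st project). -/
noncomputable def lbProfile : Fin 5200 → Fin 2201 → ℝ :=
  fun i j => if (j : ℕ) = min (i : ℕ) 2200 then 1 else 0

def nbIdx (i : Fin 5200) : Fin 2201 := ⟨min (i : ℕ) 2200, by omega⟩

def nbT : Fin 2201 := ⟨2200, by norm_num⟩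

noncomputable def nbO {m : ℕ} (x : Fin m) : Fin m → ℝ := fun j => if j = x then 1 else 0

lemma nb_profile (i : Fin 5200) : lbProfile i = nbO (nbIdx i) := by
  funext j
  simp [lbProfile, nbO, nbIdx, Fin.ext_iff]

lemma nb_le_one {m : ℕ} {p : Fin m → ℝ} (hp : IsBudget p) (x : Fin m) : p x ≤ 1 := by
  rw [← hp.2]
  exact Finset.single_le_sum (fun j _ => hp.1 j) (Finset.mem_univ x)

lemma nb_two {m : ℕ} {p : Fin m → ℝ} (hp : IsBudget p) {x y : Fin m} (h : x ≠ y) :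
    p x + p y ≤ 1 := by
  rw [← hp.2, ← Finset.sum_pair h]
  exact Finset.sum_le_sum_of_subset_of_nonneg (Finset.subset_univ _) (fun j _ _ => hp.1 j)

lemma nb_three {m : ℕ} {p : Fin m → ℝ} (hp : IsBudget p) {x y w : Fin m} (h : x ≠ y)
    (h1 : x ≠ w) (h2 : y ≠ w) : p x + p y + p w ≤ 1 := by
  have : ∑ j ∈ ({x, y, w} : Finset (Fin m)), p j = p x + p y + p w := by
    rw [Finset.sum_insert (by simp [h, h1]), Finset.sum_pair h2]; ring
  rw [← hp.2, ← this]
  exact Finset.sum_le_sum_of_subset_of_nonneg (Finset.subset_univ _) (fun j _ _ => hp.1 j)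

lemma nb_util {m : ℕ} {p : Fin m → ℝ} (hp : IsBudget p) (x : Fin m) : util (nbO x) p = p x := by
  unfold util
  rw [Finset.sum_eq_single x]
  · simp [nbO, nb_le_one hp x]
  · intro j _ hj
    simp [nbO, hj, hp.1 j]
  · simp

lemma nb_budget {m : ℕ} (x : Fin m) : IsBudget (nbO x) := by
  constructor
  · intro j; unfold nbO; split_ifs <;> norm_num
  · simp [nbO]

lemma nb_half {m : ℕ} (x y : Fin m) : IsBudget (fun j => (nbO x j + nbO y j) / 2) := by
  constructor
  · intro j
    have := (nb_budget x).1 j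
    have := (nb_budget y).1 j
    positivity
  · rw [← Finset.sum_div, Finset.sum_add_distrib, (nb_budget x).2, (nb_budget y).2]; norm_num

lemma nb_cost {m : ℕ} {p : Fin m → ℝ} (hp : IsBudget p) (x : Fin m) :
    cost p (nbO x) = 2 - 2 * p x := by
  unfold cost
  have : ∀ j, |p j - nbO x j| = p j + (if j = x then 1 - 2 * p x else 0) := by
    intro j
    by_cases h : j = x
    · subst h
      have := nb_le_one hp j
      simp only [nbO, if_true]
      rw [abs_of_nonpos (by linarith)]; ring
    · simp [nbO, h, abs_of_nonneg (hp.1 j)]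
  simp only [this]
  rw [Finset.sum_add_distrib, hp.2]
  simp; ring

lemma nb_split (N a b : ℕ) (hN : N = a + b) (f : ℕ → ℝ) :
    ∑ l : Fin N, f l = ∑ x : Fin a, f x + ∑ x : Fin b, f (a + x) := by
  subst hN
  rw [Fin.sum_univ_add]
  simp

lemma nb_sum (p : Fin 2201 → ℝ) : ∑ l, p (nbIdx l) = ∑ x, p x + 2999 * p nbT := by
  have h := nb_split 5200 2201 2999 (by norm_num) (fun l => p ⟨min l 2200, by omega⟩)
  refine h.trans ?_
  refine congrArg₂ (fun x y : ℝ => x + y) ?_ ?_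
  · apply Finset.sum_congr rfl
    intro x _
    refine congrArg p (Fin.ext ?_)
    show min (x : ℕ) 2200 = x
    omega
  · have : ∀ x : Fin 2999, p ⟨min (2201 + (x : ℕ)) 2200, by omega⟩ = p nbT := by
      intro x
      refine congrArg p (Fin.ext ?_)
      show min (2201 + (x : ℕ)) 2200 = 2200
      omega
    rw [Finset.sum_congr rfl (fun x _ => this x)]
    rw [Finset.sum_const, Finset.card_univ, Fintype.card_fin, nsmul_eq_mul]
    norm_num

lemma nb_sc {p : Fin 2201 → ℝ} (hp : IsBudget p) :
    ∑ l, cost p (lbProfile l) = 10398 - 5998 * p nbT := by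
  have : ∀ l, cost p (lbProfile l) = 2 - 2 * p (nbIdx l) := fun l => by
    rw [nb_profile, nb_cost hp]
  simp only [this]
  rw [Finset.sum_sub_distrib, ← Finset.mul_sum, nb_sum, hp.2]
  simp; ring

/-- Structure of Nash outcomes for three unit vectors. -/
lemma nb_nash {m : ℕ} {a b c : Fin m} {z : Fin m → ℝ} (h : NashOutcome (nbO a) (nbO b) (nbO c) z) :
    (c = a → z a = 1) ∧ (c = b → z b = 1) ∧ (c ≠ a → a = b → z a = 1) ∧
    (c ≠ a → c ≠ b → a ≠ b → z a = 1 / 2 ∧ z b = 1 / 2) := by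
  obtain ⟨hz, h1, h2, h3, -⟩ := h
  rw [nb_util hz, nb_util (nb_budget _)] at h1 h2
  have za := nb_le_one hz a
  have zb := nb_le_one hz b
  refine ⟨?_, ?_, ?_, ?_⟩
  · rintro rfl
    simp [nbO] at h1; linarith
  · rintro rfl
    simp [nbO] at h2; linarith
  · rintro hc rfl
    have := h3 _ (nb_budget a)
    simp only [nb_util hz, nb_util (nb_budget _)] at this
    simp [nbO, hc.symm] at this
    have := hz.1 a
    nlinarith
  · intro hca hcb hab
    have := h3 _ (nb_half a b)
    simp only [nb_util hz, nb_util (nb_budget _), nb_util (nb_half a b)] at this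
    simp [nbO, hca.symm, hcb.symm, hab, hab.symm] at this
    have h2 := nb_two hz hab
    have h4 := hz.1 a
    have h5 := hz.1 b
    have h6 : (z a - z b) ^ 2 ≤ 0 := by nlinarith
    have h7 : z a - z b = 0 := by nlinarith [sq_nonneg (z a - z b)]
    constructor <;> nlinarith

noncomputable def nbB (i : Fin 5200) : ℝ := nbO nbT (nbIdx i)

lemma nb_sumB : ∑ i, nbB i = 3000 := by
  unfold nbB
  rw [nb_sum, (nb_budget nbT).2]
  simp [nbO]; norm_num

lemma nb_bound {m : ℕ} {a b c t : Fin m} {z : Fin m → ℝ}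
    (h : NashOutcome (nbO a) (nbO b) (nbO c) z) :
    z t ≤ (nbO t a + nbO t b) / 2 + (nbO t a + nbO t b) * nbO t c / 2
      - nbO t a * nbO t b * nbO t c := by
  obtain ⟨h1, h2, h3, h4⟩ := nb_nash h
  have hz := h.1
  have zt := nb_le_one hz t
  unfold nbO
  by_cases ha : a = t <;> by_cases hb : b = t <;> by_cases hc : c = t <;>
    simp only [ha, hb, hc, if_true, if_false] <;> norm_num <;> try linarith
  · by_cases hcb : c = b
    · have := nb_two hz hb; have := h2 hcb; linarith
    · have := (h4 (by rw [ha]; exact hc) hcb (by rw [ha]; exact Ne.symm hb)).1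
      rw [ha] at this; linarith
  · by_cases hca : c = a
    · have := nb_two hz ha; have := h1 hca; linarith
    · have := (h4 hca (by rw [hb]; exact hc) (by rw [hb]; exact ha)).2
      rw [hb] at this; linarith
  all_goals
    have ta := nb_two hz ha
    have tb := nb_two hz hb
    by_cases hca : c = a
    · have := h1 hca; linarith
    by_cases hcb : c = b
    · have := h2 hcb; linarith
    by_cases hab : a = b
    · have := h3 hca hab; linarith
    · have := h4 hca hcb hab
      have := nb_three hz hab ha hb
      linarith

lemma nb_triple (B : Fin 5200 → ℝ) (S : ℝ) (hS : ∑ i, B i = S) :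
    ∑ i, ∑ j, ∑ k, ((10398 : ℝ) - 5998 * ((B i + B j) / 2 + (B i + B j) * B k / 2 - B i * B j * B k))
      = 10398 * 5200 ^ 3 - 5998 * (5200 ^ 2 * S + 5200 * S ^ 2 - S ^ 3) := by
  have e1 : ∀ i j, ∑ k, ((10398 : ℝ) - 5998 * ((B i + B j) / 2 + (B i + B j) * B k / 2
      - B i * B j * B k)) = (10398 * 5200 - 5998 * ((5200 + S) / 2 * B i))
        - 5998 * ((5200 + S) / 2 - S * B i) * B j := by
    intro i j
    have : ∀ k, ((10398 : ℝ) - 5998 * ((B i + B j) / 2 + (B i + B j) * B k / 2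
      - B i * B j * B k)) = (10398 - 5998 * ((B i + B j) / 2))
        - 5998 * ((B i + B j) / 2 - B i * B j) * B k := fun k => by ring
    simp only [this]
    rw [Finset.sum_sub_distrib, ← Finset.mul_sum, hS, Finset.sum_const, Finset.card_univ,
      Fintype.card_fin, nsmul_eq_mul]
    push_cast; ring
  simp only [e1]
  have e2 : ∀ i, ∑ j, ((10398 * 5200 - 5998 * ((5200 + S) / 2 * B i))
        - 5998 * ((5200 + S) / 2 - S * B i) * B j) =
      (10398 * 5200 ^ 2 - 5998 * ((5200 + S) / 2) * S)
        - 5998 * ((5200 + S) / 2 * 5200 - S ^ 2) * B i := by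
    intro i
    rw [Finset.sum_sub_distrib, ← Finset.mul_sum, hS, Finset.sum_const, Finset.card_univ,
      Fintype.card_fin, nsmul_eq_mul]
    push_cast; ring
  simp only [e2]
  rw [Finset.sum_sub_distrib, ← Finset.mul_sum, hS, Finset.sum_const, Finset.card_univ,
      Fintype.card_fin, nsmul_eq_mul]
  push_cast; ring

/-- Lower bound of 1.38 on the distortion of Nash bargaining with three sampled
voters on the concrete instance `lbProfile`: the optimal social cost is 4400, and
for every choice function `z` of Nash bargaining outcomes for each ordered triple of
voters, the expected social cost exceeds `1.38 · 4400`. -/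
theorem nash_lower_bound_138 :
    (∀ p : Fin 2201 → ℝ, IsBudget p → 4400 ≤ ∑ l, cost p (lbProfile l)) ∧
    (∃ p : Fin 2201 → ℝ, IsBudget p ∧ ∑ l, cost p (lbProfile l) = 4400) ∧
    (∀ z : Fin 5200 → Fin 5200 → Fin 5200 → (Fin 2201 → ℝ),
      (∀ i j k, NashOutcome (lbProfile i) (lbProfile j) (lbProfile k) (z i j k)) →
      1.38 * 4400 <
        (1 / (5200 : ℝ) ^ 3) * ∑ i, ∑ j, ∑ k, ∑ l, cost (z i j k) (lbProfile l)) := by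
  refine ⟨?_, ?_, ?_⟩
  · intro p hp
    rw [nb_sc hp]
    have := nb_le_one hp nbT
    linarith
  · refine ⟨nbO nbT, nb_budget _, ?_⟩
    rw [nb_sc (nb_budget _)]
    simp [nbO]; norm_num
  · intro z hz
    have key : ∑ i, ∑ j, ∑ k, ((10398 : ℝ) - 5998 * ((nbB i + nbB j) / 2
        + (nbB i + nbB j) * nbB k / 2 - nbB i * nbB j * nbB k))
        ≤ ∑ i, ∑ j, ∑ k, ∑ l, cost (z i j k) (lbProfile l) := by
      refine Finset.sum_le_sum fun i _ => Finset.sum_le_sum fun j _ =>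
        Finset.sum_le_sum fun k _ => ?_
      have h := hz i j k
      rw [nb_sc h.1]
      rw [nb_profile, nb_profile, nb_profile] at h
      have := nb_bound (t := nbT) h
      unfold nbB
      linarith
    rw [nb_triple nbB 3000 nb_sumB] at key
    rw [one_div, ← div_eq_inv_mul, lt_div_iff₀ (by norm_num)]
    refine lt_of_lt_of_le ?_ key
    norm_num
end

section
/- The distortion of the class of median schemes is bounded by its pessimistic distortion over 6 voters. Precisely, let c ≥ 0 and suppose that for every 6-tuple of budgets (w_1,…,w_6) ∈ 𝔹^6 and every family (p^R), indexed by the 3-element subsets R of [6], such that each p^R ∈ 𝔹 is a median-scheme outcome for the triple (w_r)_{r∈R}, one has Σ_{R, |R|=3} Σ_{i ∈ [6]∖R} d(p^R, w_i) ≤ 10·c·min_{v∈𝔹} Σ_{i=1}^6 d(v, w_i). Then for every n ≥ 1, every vote profile (v_1,…,v_n) ∈ 𝔹^n, and every function h, symmetric in its three arguments, assigning to each ordered triple (i,j,k) ∈ [n]³ a median-scheme outcome h(i,j,k) for (v_i, v_j, v_k), one has (1/n⁴) Σ_{(i,j,k,l)∈[n]⁴} d(h(i,j,k), v_l) ≤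 c·(1/n)·min_{p∈𝔹} Σ_{l=1}^n d(p, v_l). -/
/-- `z` is a median-scheme outcome for `(a,b,c)`: a budget maximizing
`u(z,a) + u(z,b) + u(z,c)` over all budgets. -/
def MedianOutcome {m : ℕ} (a b c z : Fin m → ℝ) : Prop :=
  IsBudget z ∧ ∀ z' : Fin m → ℝ, IsBudget z' →
    util z' a + util z' b + util z' c ≤ util z a + util z b + util z c

/-- `z` is a median-scheme outcome for the triple of budgets `(w_r)_{r∈R}`:
a budget maximizing `Σ_{r∈R} u(z, w_r)` over all budgets. -/
def MedianOutcomeOn {m : ℕ} {ι : Type*} [Fintype ι]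
    (w : ι → Fin m → ℝ) (R : Finset ι) (z : Fin m → ℝ) : Prop :=
  IsBudget z ∧ ∀ z' : Fin m → ℝ, IsBudget z' →
    ∑ r ∈ R, util z' (w r) ≤ ∑ r ∈ R, util z (w r)

lemma aux_marginal {α β N : Type*} [Fintype α] [Fintype β] [Fintype N] [DecidableEq β]
    [DecidableEq α]
    (g : α → β) (hg : Function.Injective g) (F : (α → N) → ℝ) :
    ∑ f : β → N, F (f ∘ g) =
      (Fintype.card N : ℝ) ^ (Fintype.card β - Fintype.card α) * ∑ t : α → N, F t := by
  classical
  let e := Equiv.piEquivPiSubtypeProd (fun x => x ∈ Set.range g) (fun _ : β => N)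
  let e2 : (α → N) ≃ ({x // x ∈ Set.range g} → N) :=
    (Equiv.ofInjective g hg).arrowCongr (Equiv.refl N)
  have h1 : ∑ f : β → N, F (f ∘ g) =
      ∑ q : ({x // x ∈ Set.range g} → N) × ({x // ¬ x ∈ Set.range g} → N), F (e2.symm q.1) := by
    apply Fintype.sum_equiv e
    intro f
    rfl
  have hcard : Fintype.card {x // ¬ x ∈ Set.range g} = Fintype.card β - Fintype.card α := by
    rw [Fintype.card_subtype_compl]
    congr 1
    exact (Fintype.card_congr (Equiv.ofInjective g hg)).symm
  rw [h1, Fintype.sum_prod_type]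
  simp only [Finset.sum_const, Finset.card_univ, Fintype.card_fun, hcard, nsmul_eq_mul,
    Nat.cast_pow]
  rw [← Finset.mul_sum, e2.symm.sum_comp]

lemma aux_cons {N : Type*} [Fintype N] {k : ℕ} (F : (Fin (k + 1) → N) → ℝ) :
    ∑ t, F t = ∑ i, ∑ t : Fin k → N, F (Fin.cons i t) := by
  rw [← (Fin.consEquiv (fun _ : Fin (k + 1) => N)).sum_comp, Fintype.sum_prod_type]
  rfl

lemma aux_four {n : ℕ} (G : Fin n → Fin n → Fin n → Fin n → ℝ) (a b c d : Fin 6)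
    (hab : a ≠ b) (hac : a ≠ c) (had : a ≠ d) (hbc : b ≠ c) (hbd : b ≠ d) (hcd : c ≠ d) :
    ∑ f : Fin 6 → Fin n, G (f a) (f b) (f c) (f d) =
      (n : ℝ) ^ 2 * ∑ i, ∑ j, ∑ k, ∑ l, G i j k l := by
  have hg : Function.Injective ![a, b, c, d] := by
    intro x y hxy
    fin_cases x <;> fin_cases y <;> simp_all
  have := aux_marginal (N := Fin n) ![a, b, c, d] hg (fun t => G (t 0) (t 1) (t 2) (t 3))
  simp only [Fintype.card_fin] at this
  have h4 : ∑ t : Fin 4 → Fin n, G (t 0) (t 1) (t 2) (t 3) =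
      ∑ i, ∑ j, ∑ k, ∑ l, G i j k l := by
    simp only [aux_cons, Fintype.sum_unique]
    rfl
  rw [h4] at this
  exact this

lemma aux_one {n : ℕ} (G : Fin n → ℝ) (a : Fin 6) :
    ∑ f : Fin 6 → Fin n, G (f a) = (n : ℝ) ^ 5 * ∑ i, G i := by
  have hg : Function.Injective ![a] := Function.injective_of_subsingleton _
  have := aux_marginal (N := Fin n) ![a] hg (fun t => G (t 0))
  simp only [Fintype.card_fin] at this
  rw [aux_cons (fun t : Fin 1 → Fin n => G (t 0))] at this
  simpa using this

/-- The distortion of the class of median schemes is bounded by its pessimistic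
distortion over 6 voters: if for every 6-tuple of budgets and every family of
median-scheme outcomes indexed by the 3-element subsets `R ⊆ [6]` the pessimistic
social cost is at most `10·c` times the optimal social cost, then for every vote
profile and every symmetric median-scheme selection `h`, the expected social cost of
the triadic mechanism is at most `c` times `(1/n)` times the optimal social cost. -/
theorem distortion_le_pessimistic_distortion {m : ℕ} (c : ℝ) (hc : 0 ≤ c)
    (hPD : ∀ w : Fin 6 → Fin m → ℝ, (∀ i, IsBudget (w i)) →
      ∀ p : Finset (Fin 6) → (Fin m → ℝ),
        (∀ R ∈ Finset.univ.powersetCard 3, MedianOutcomeOn w R (p R)) →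
        ∀ v0 : Fin m → ℝ, IsBudget v0 →
          ∑ R ∈ Finset.univ.powersetCard 3, ∑ i ∈ Rᶜ, cost (p R) (w i) ≤
            10 * c * ∑ i, cost v0 (w i)) :
    ∀ n : ℕ, 1 ≤ n → ∀ v : Fin n → Fin m → ℝ, (∀ i, IsBudget (v i)) →
      ∀ h : Fin n → Fin n → Fin n → (Fin m → ℝ),
        (∀ i j k, h i j k = h j i k) →
        (∀ i j k, h i j k = h i k j) →
        (∀ i j k, MedianOutcome (v i) (v j) (v k) (h i j k)) →
        ∀ popt : Fin m → ℝ, IsBudget popt →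
          (∀ p : Fin m → ℝ, IsBudget p → ∑ l, cost popt (v l) ≤ ∑ l, cost p (v l)) →
          (1 / (n : ℝ) ^ 4) * ∑ i, ∑ j, ∑ k, ∑ l, cost (h i j k) (v l) ≤
            c * ((1 / (n : ℝ)) * ∑ l, cost popt (v l)) := by
  intro n hn v hv h _ _ hmed popt hpopt _
  classical
  have hex : ∀ R : Finset (Fin 6), ∃ q : Fin 6 × Fin 6 × Fin 6, R.card = 3 →
      q.1 ≠ q.2.1 ∧ q.1 ≠ q.2.2 ∧ q.2.1 ≠ q.2.2 ∧ R = {q.1, q.2.1, q.2.2} := by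
    intro R
    by_cases hR : R.card = 3
    · obtain ⟨x, y, z, h1, h2, h3, h4⟩ := Finset.card_eq_three.1 hR
      exact ⟨(x, y, z), fun _ => ⟨h1, h2, h3, h4⟩⟩
    · exact ⟨(0, 0, 0), fun h' => absurd h' hR⟩
  choose q hq using hex
  set S := ∑ i, ∑ j, ∑ k, ∑ l, cost (h i j k) (v l) with hS
  set O := ∑ l, cost popt (v l) with hO
  have key : ∀ f : Fin 6 → Fin n,
      ∑ R ∈ (Finset.univ : Finset (Fin 6)).powersetCard 3, ∑ i ∈ Rᶜ,
        cost (h (f (q R).1) (f (q R).2.1) (f (q R).2.2)) (v (f i)) ≤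
      10 * c * ∑ i, cost popt (v (f i)) := by
    intro f
    refine hPD (fun i => v (f i)) (fun i => hv _)
      (fun R => h (f (q R).1) (f (q R).2.1) (f (q R).2.2)) ?_ popt hpopt
    intro R hR
    obtain ⟨h1, h2, h3, h4⟩ := hq R (Finset.mem_powersetCard.1 hR).2
    obtain ⟨hb, hm⟩ := hmed (f (q R).1) (f (q R).2.1) (f (q R).2.2)
    refine ⟨hb, fun z' hz' => ?_⟩
    have hsum : ∀ F : Fin 6 → ℝ, ∑ r ∈ R, F r = F (q R).1 + F (q R).2.1 + F (q R).2.2 := by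
      intro F
      conv_lhs => rw [h4]
      rw [Finset.sum_insert (by simp [h1, h2]), Finset.sum_insert (by simp [h3]),
        Finset.sum_singleton]
      ring
    rw [hsum, hsum]
    exact hm z' hz'
  have tot := Finset.sum_le_sum (s := Finset.univ) (fun f _ => key f)
  have hL : ∑ f : Fin 6 → Fin n,
      ∑ R ∈ (Finset.univ : Finset (Fin 6)).powersetCard 3, ∑ i ∈ Rᶜ,
        cost (h (f (q R).1) (f (q R).2.1) (f (q R).2.2)) (v (f i)) = 60 * ((n : ℝ) ^ 2 * S) := by
    rw [Finset.sum_comm]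
    have : ∀ R ∈ (Finset.univ : Finset (Fin 6)).powersetCard 3,
        ∑ f : Fin 6 → Fin n, ∑ i ∈ Rᶜ,
          cost (h (f (q R).1) (f (q R).2.1) (f (q R).2.2)) (v (f i)) =
          3 * ((n : ℝ) ^ 2 * S) := by
      intro R hR
      have hR3 := (Finset.mem_powersetCard.1 hR).2
      obtain ⟨h1, h2, h3, h4⟩ := hq R hR3
      rw [Finset.sum_comm]
      have : ∀ i ∈ Rᶜ, ∑ f : Fin 6 → Fin n,
          cost (h (f (q R).1) (f (q R).2.1) (f (q R).2.2)) (v (f i)) = (n : ℝ) ^ 2 * S := by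
        intro i hi
        have hi' : i ∉ ({(q R).1, (q R).2.1, (q R).2.2} : Finset (Fin 6)) := by
          rw [← h4]; exact Finset.mem_compl.1 hi
        simp only [Finset.mem_insert, Finset.mem_singleton, not_or] at hi'
        exact aux_four (fun i j k l => cost (h i j k) (v l)) _ _ _ _ h1 h2 (Ne.symm hi'.1) h3
          (Ne.symm hi'.2.1) (Ne.symm hi'.2.2)
      rw [Finset.sum_congr rfl this, Finset.sum_const, Finset.card_compl, hR3]
      simp
    rw [Finset.sum_congr rfl this, Finset.sum_const, Finset.card_powersetCard]
    have h63 : (Finset.univ : Finset (Fin 6)).card.choose 3 = 20 := by decide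
    rw [h63, nsmul_eq_mul]
    push_cast
    ring
  have hRt : ∑ f : Fin 6 → Fin n, 10 * c * ∑ i, cost popt (v (f i)) =
      60 * (c * ((n : ℝ) ^ 5 * O)) := by
    rw [← Finset.mul_sum, Finset.sum_comm]
    rw [Finset.sum_congr rfl (fun i _ => aux_one (fun l => cost popt (v l)) i)]
    simp only [Finset.sum_const, Finset.card_univ, Fintype.card_fin, nsmul_eq_mul]
    push_cast
    ring
  rw [hL, hRt] at tot
  have hn0 : (0 : ℝ) < n := by exact_mod_cast hn
  have h2 : (0 : ℝ) < (n : ℝ) ^ 6 := by positivity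
  refine le_of_mul_le_mul_left ?_ h2
  have e1 : (n : ℝ) ^ 6 * (1 / (n : ℝ) ^ 4 * S) = (n : ℝ) ^ 2 * S := by
    field_simp
  have e2 : (n : ℝ) ^ 6 * (c * (1 / (n : ℝ) * O)) = c * ((n : ℝ) ^ 5 * O) := by
    field_simp
  rw [e1, e2]
  linarith
end
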